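/- Let N ≥ 1, let L₁, …, L_N > 0, let f : ℝ → ℝ be continuously differentiable, and let u : ℝ^N → ℝ be a C³ function, periodic with period L_i in each coordinate direction, satisfying Δu + f(u) = 0 on ℝ^N. Set v = ‖∇u‖ (a Lipschitz function, differentiable almost everywhere) and Q = [0,L₁) × ⋯ × [0,L_N). Then ∫_Q ( ‖∇v(x)‖² − f'(u(x)) v(x)² ) dx = − ∫_{Q ∩ U} ‖∇u(x)‖² ‖DV(x)‖_F² dx, where ∇v is the a.e.-defined derivative of v, U = {x : ∇u(x) ≠ 0}, V = ∇u/‖∇u‖ on U, and ‖·‖_F is the Frobenius norm. -/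

import Mathlib

open RealInnerProductSpace MeasureTheory Filter

/-- The Hessian bilinear form of `u : ℝ^N → ℝ` at `x`, applied to `w₁, w₂`. -/
noncomputable def Hess {N : ℕ} (u : EuclideanSpace ℝ (Fin N) → ℝ)
    (x w₁ w₂ : EuclideanSpace ℝ (Fin N)) : ℝ :=
  fderiv ℝ (fun y => fderiv ℝ u y w₁) x w₂

/-- The Laplacian `Δu = tr Hess u`. -/
noncomputable def Lap {N : ℕ} (u : EuclideanSpace ℝ (Fin N) → ℝ)
    (x : EuclideanSpace ℝ (Fin N)) : ℝ :=
  ∑ i : Fin N, Hess u x (EuclideanSpace.single i 1) (EuclideanSpace.single i 1)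

/-- The normalized gradient `V = ∇u / ‖∇u‖` (junk value `0` where `∇u = 0`). -/
noncomputable def NGrad {N : ℕ} (u : EuclideanSpace ℝ (Fin N) → ℝ)
    (x : EuclideanSpace ℝ (Fin N)) : EuclideanSpace ℝ (Fin N) :=
  ‖gradient u x‖⁻¹ • gradient u x

/-- The squared Frobenius norm of a linear map on `ℝ^N`. -/
noncomputable def FrobSq {N : ℕ}
    (A : EuclideanSpace ℝ (Fin N) →L[ℝ] EuclideanSpace ℝ (Fin N)) : ℝ :=
  ∑ i : Fin N, ‖A (EuclideanSpace.single i 1)‖ ^ 2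

/-- The divergence `div Z = ∑ i ∂Zᵢ/∂xᵢ` of a vector field on `ℝ^N`. -/
noncomputable def Divg {N : ℕ} (Z : EuclideanSpace ℝ (Fin N) → EuclideanSpace ℝ (Fin N))
    (x : EuclideanSpace ℝ (Fin N)) : ℝ :=
  ∑ i : Fin N, ⟪fderiv ℝ Z x (EuclideanSpace.single i 1), EuclideanSpace.single i 1⟫

/-- The Frobenius inner product `⟨A, B⟩_F = ∑ᵢⱼ Aᵢⱼ Bᵢⱼ` of two linear maps on `ℝ^N`. -/
noncomputable def FrobInner {N : ℕ}
    (A B : EuclideanSpace ℝ (Fin N) →L[ℝ] EuclideanSpace ℝ (Fin N)) : ℝ :=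
  ∑ i : Fin N, ⟪A (EuclideanSpace.single i 1), B (EuclideanSpace.single i 1)⟫

/-!
For `G = ∇u` and `V = G / ‖G‖`, differentiating `G = ‖G‖ V` and using `V ⟂ DV w` gives
`‖G‖² ‖DV w‖² = ‖DG w‖² - (D‖G‖ w)²` wherever `G ≠ 0`, hence
`‖∇u‖² ‖DV‖_F² = ‖D²u‖_F² - ‖∇v‖²` there. Where `∇u = 0`, the function `v` has a minimum, so
`∇v = 0`, and `D²u = 0` at almost every such point, namely at the Lebesgue density points of this
set. So the right-hand side is `∫_Q (‖∇v‖² - ‖D²u‖_F²)`. Bochner's formula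
`div (D²u ∇u) = ⟨∇Δu, ∇u⟩ + ‖D²u‖_F²`, integrated over a period box, turns this into
`∫_Q (‖∇v‖² + ⟨∇Δu, ∇u⟩)`. Finally `f ∘ u = -Δu` is `C¹`, so `f` is differentiable at `u x` wherever
`∇u x ≠ 0`, and the chain rule gives `⟨∇Δu, ∇u⟩ = -f'(u) ‖∇u‖²` at every point.
-/

section Field

variable {𝕜 E F : Type*} [NontriviallyNormedField 𝕜] [NormedAddCommGroup E] [NormedSpace 𝕜 E]
  [NormedAddCommGroup F] [NormedSpace 𝕜 F]

lemma periodic_fderiv {h : E → F} {c : E}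
    (hh : Function.Periodic h c) : Function.Periodic (fderiv 𝕜 h) c := fun x => by
  rw [← fderiv_comp_add_right, hh.funext]

/-- Invert `u` along a line on which its derivative does not vanish. -/
lemma differentiableAt_of_comp_of_hasStrictFDerivAt [CompleteSpace 𝕜] {u : E → 𝕜}
    {u' : E →L[𝕜] 𝕜} {f : 𝕜 → F} {x : E} (hu : HasStrictFDerivAt u u' x) (hu' : u' ≠ 0)
    (hfu : DifferentiableAt 𝕜 (f ∘ u) x) : DifferentiableAt 𝕜 f (u x) := by
  obtain ⟨w, hw⟩ : ∃ w, u' w ≠ 0 := DFunLike.ne_iff.1 hu'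
  let line : 𝕜 → E := fun t => x + t • w
  have line_zero : line 0 = x := by simp [line]
  have hline : HasStrictDerivAt line w 0 := by
    simpa [line] using ((hasStrictDerivAt_id (0 : 𝕜)).smul_const w).const_add x
  have huline : HasStrictDerivAt (u ∘ line) (u' w) 0 := by
    rw [← line_zero] at hu
    exact hu.comp_hasStrictDerivAt 0 hline
  let g : 𝕜 → 𝕜 := huline.localInverse (u ∘ line) (u' w) 0 hw
  have hg : DifferentiableAt 𝕜 g (u x) := by
    simpa [line_zero] using (huline.to_localInverse hw).hasDerivAt.differentiableAt
  have hg_right : ∀ᶠ s in nhds (u x), u (line (g s)) = s := by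
    simpa [line_zero] using huline.eventually_right_inverse hw
  have line_g : line (g (u x)) = x := by
    simpa [line_zero] using congrArg line (huline.eventually_left_inverse hw).self_of_nhds
  have hf_eq : f =ᶠ[nhds (u x)] (f ∘ u) ∘ line ∘ g := by
    filter_upwards [hg_right] with s hs
    simp [hs]
  rw [hf_eq.differentiableAt_iff]
  rw [← line_g] at hfu
  exact hfu.comp (u x) (DifferentiableAt.comp (u x) (by fun_prop) hg)

end Field

section Norm

variable {E F : Type*} [NormedAddCommGroup E] [NormedSpace ℝ E]

lemma fderiv_norm_eq_zero [NormedAddCommGroup F] {G : E → F} {x : E} (hx : G x = 0) :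
    fderiv ℝ (fun y => ‖G y‖) x = 0 :=
  IsLocalMin.fderiv_eq_zero (Eventually.of_forall fun y => by simp [hx])

variable [NormedAddCommGroup F] [InnerProductSpace ℝ F]

lemma inner_fderiv_eq_zero_of_norm_eventuallyEq_const {V : E → F} {x : E} {c : ℝ}
    (hV : DifferentiableAt ℝ V x) (hc : (fun y => ‖V y‖) =ᶠ[nhds x] fun _ => c) (w : E) :
    ⟪V x, fderiv ℝ V x w⟫ = 0 := by
  have hconst : (fun y => ⟪V y, V y⟫) =ᶠ[nhds x] fun _ => c ^ 2 := by
    filter_upwards [hc] with y hy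
    rw [real_inner_self_eq_norm_sq, hy]
  have hderiv := fderiv_inner_apply ℝ hV hV w
  rw [hconst.fderiv_eq, fderiv_fun_const, real_inner_comm (V x)] at hderiv
  simp only [Pi.zero_apply, zero_apply] at hderiv
  linarith

lemma norm_sq_mul_norm_fderiv_normalize_sq {G : E → F} {x : E} (hG : DifferentiableAt ℝ G x)
    (hx : G x ≠ 0) (w : E) :
    ‖G x‖ ^ 2 * ‖fderiv ℝ (fun y => NormedSpace.normalize (G y)) x w‖ ^ 2 =
      ‖fderiv ℝ G x w‖ ^ 2 - fderiv ℝ (fun y => ‖G y‖) x w ^ 2 := by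
  set V : E → F := fun y => NormedSpace.normalize (G y)
  have hv : DifferentiableAt ℝ (fun y => ‖G y‖) x := hG.norm ℝ hx
  have hV : DifferentiableAt ℝ V x := (hv.inv (norm_ne_zero_iff.2 hx)).smul hG
  have norm_V : (fun y => ‖V y‖) =ᶠ[nhds x] fun _ => 1 := by
    filter_upwards [hG.continuousAt.eventually_ne hx] with y hy
    exact NormedSpace.norm_normalize_eq_one_iff.2 hy
  have horth : ⟪V x, fderiv ℝ V x w⟫ = 0 :=
    inner_fderiv_eq_zero_of_norm_eventuallyEq_const hV norm_V w
  have hsplit : fderiv ℝ G x w =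
      ‖G x‖ • fderiv ℝ V x w + fderiv ℝ (fun y => ‖G y‖) x w • V x := by
    have hG_eq : G = fun y => ‖G y‖ • V y := by
      ext y
      exact (NormedSpace.norm_smul_normalize (G y)).symm
    conv_lhs => rw [hG_eq, fderiv_fun_smul hv hV]
    simp
  rw [hsplit, norm_add_sq_real, real_inner_smul_left, real_inner_smul_right, real_inner_comm,
    horth, norm_smul, norm_smul, norm_V.eq_of_nhds, norm_norm, mul_one, Real.norm_eq_abs, sq_abs]
  ring

end Norm

lemma ae_fderiv_eq_zero_of_eq_const {E : Type*} [NormedAddCommGroup E] [NormedSpace ℝ E]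
    [FiniteDimensional ℝ E] [MeasurableSpace E] [BorelSpace E] (μ : Measure E)
    [μ.IsAddHaarMeasure] {G : E → E} (hG : Differentiable ℝ G) (c : E) :
    ∀ᵐ x ∂μ, G x = c → fderiv ℝ G x = 0 := by
  have hmeas : MeasurableSet {x | G x = c} :=
    (isClosed_singleton.preimage hG.continuous).measurableSet
  have happrox : ApproximatesLinearOn G (0 : E →L[ℝ] E) {x | G x = c} 0 := by
    intro x hx y hy
    rw [Set.mem_ofPred_eq] at hx hy
    simp [hx, hy]
  have hnorm := happrox.norm_fderiv_sub_le μ hmeas (fderiv ℝ G)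
    fun x _ => (hG x).hasFDerivAt.hasFDerivWithinAt
  rw [ae_restrict_iff' hmeas] at hnorm
  filter_upwards [hnorm] with x hx hxc
  simpa using hx hxc

section Gradient

variable {E : Type*} [NormedAddCommGroup E] [InnerProductSpace ℝ E] [CompleteSpace E] {u : E → ℝ}

lemma contDiff_gradient {m n : WithTop ℕ∞} (hu : ContDiff ℝ n u) (hmn : m + 1 ≤ n) :
    ContDiff ℝ m (gradient u) :=
  (InnerProductSpace.toDual ℝ E).symm.toContinuousLinearEquiv.contDiff.comp (hu.fderiv_right hmn)

lemma periodic_gradient {c : E} (hu : Function.Periodic u c) : Function.Periodic (gradient u) c :=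
  (periodic_fderiv hu).comp _

lemma inner_fderiv_gradient (u : E → ℝ) (x a b : E) :
    ⟪fderiv ℝ (gradient u) x a, b⟫ = fderiv ℝ (fderiv ℝ u) x a b := by
  have hcomp : fderiv ℝ (fderiv ℝ u) x =
      (InnerProductSpace.toDual ℝ E).toContinuousLinearEquiv.toContinuousLinearMap.comp
        (fderiv ℝ (gradient u) x) := by
    rw [← toDual_comp_gradient]
    exact (InnerProductSpace.toDual ℝ E).toContinuousLinearEquiv.comp_fderiv
  rw [hcomp]
  rfl

lemma isSymmetric_fderiv_gradient {x : E} (hu : ContDiffAt ℝ 2 u x) :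
    (fderiv ℝ (gradient u) x).toLinearMap.IsSymmetric := fun a b => by
  have hsymm := hu.isSymmSndFDerivAt (by simp) a b
  rw [← inner_fderiv_gradient, ← inner_fderiv_gradient, real_inner_comm a] at hsymm
  exact hsymm

lemma fderiv_comp_apply_gradient {F : Type*} [NormedAddCommGroup F] [NormedSpace ℝ F] {f : ℝ → F}
    {x : E} (hu : ContDiffAt ℝ 1 u x) (hfu : DifferentiableAt ℝ (f ∘ u) x) :
    fderiv ℝ (f ∘ u) x (gradient u x) = ‖gradient u x‖ ^ 2 • deriv f (u x) := by
  by_cases hx : gradient u x = 0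
  · simp [hx]
  have hu' : fderiv ℝ u x ≠ 0 := by
    rwa [← toDual_gradient, ne_eq, LinearIsometryEquiv.map_eq_zero_iff]
  have hf : DifferentiableAt ℝ f (u x) :=
    differentiableAt_of_comp_of_hasStrictFDerivAt (hu.hasStrictFDerivAt one_ne_zero) hu' hfu
  rw [fderiv_comp x hf (hu.differentiableAt one_ne_zero), ContinuousLinearMap.comp_apply,
    ← inner_gradient_left, real_inner_self_eq_norm_sq, fderiv_eq_smul_deriv]

end Gradient

section Frobenius

variable {N : ℕ}

lemma frobSq_nonneg (A : EuclideanSpace ℝ (Fin N) →L[ℝ] EuclideanSpace ℝ (Fin N)) :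
    0 ≤ FrobSq A :=
  Finset.sum_nonneg fun _ _ => sq_nonneg _

lemma continuous_frobSq : Continuous (FrobSq (N := N)) := by
  unfold FrobSq
  fun_prop

lemma sum_inner_apply_apply_of_isSymmetric
    {A : EuclideanSpace ℝ (Fin N) →L[ℝ] EuclideanSpace ℝ (Fin N)}
    (hA : A.toLinearMap.IsSymmetric) :
    ∑ i, ⟪A (A (EuclideanSpace.single i 1)), EuclideanSpace.single i 1⟫ = FrobSq A :=
  Finset.sum_congr rfl fun i _ => by
    rw [← real_inner_self_eq_norm_sq]
    exact hA _ _

lemma norm_gradient_sq_eq_sum (h : EuclideanSpace ℝ (Fin N) → ℝ) (x : EuclideanSpace ℝ (Fin N)) :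
    ‖gradient h x‖ ^ 2 = ∑ i, fderiv ℝ h x (EuclideanSpace.single i 1) ^ 2 := by
  simp [← (EuclideanSpace.basisFun (Fin N) ℝ).sum_sq_norm_inner_left, inner_gradient_left]

lemma measurable_norm_gradient_sq (h : EuclideanSpace ℝ (Fin N) → ℝ) :
    Measurable fun x => ‖gradient h x‖ ^ 2 := by
  simp only [norm_gradient_sq_eq_sum]
  exact Finset.measurable_sum _ fun i _ => (measurable_fderiv_apply_const ℝ h _).pow_const 2

variable {u : EuclideanSpace ℝ (Fin N) → ℝ} {x : EuclideanSpace ℝ (Fin N)}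

lemma gradient_norm_gradient_eq_zero (hx : gradient u x = 0) :
    gradient (fun z => ‖gradient u z‖) x = 0 := by
  rw [gradient, fderiv_norm_eq_zero hx, map_zero]

lemma norm_gradient_sq_mul_frobSq_fderiv_nGrad (hu : DifferentiableAt ℝ (gradient u) x)
    (hx : gradient u x ≠ 0) :
    ‖gradient u x‖ ^ 2 * FrobSq (fderiv ℝ (NGrad u) x) =
      FrobSq (fderiv ℝ (gradient u) x) - ‖gradient (fun z => ‖gradient u z‖) x‖ ^ 2 := by
  rw [norm_gradient_sq_eq_sum fun z => ‖gradient u z‖, FrobSq, FrobSq, Finset.mul_sum,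
    ← Finset.sum_sub_distrib]
  exact Finset.sum_congr rfl fun i _ => norm_sq_mul_norm_fderiv_normalize_sq hu hx _

lemma norm_gradient_norm_gradient_sq_le (hu : DifferentiableAt ℝ (gradient u) x) :
    ‖gradient (fun z => ‖gradient u z‖) x‖ ^ 2 ≤ FrobSq (fderiv ℝ (gradient u) x) := by
  by_cases hx : gradient u x = 0
  · simpa [gradient_norm_gradient_eq_zero hx] using frobSq_nonneg _
  · have hnonneg := mul_nonneg (sq_nonneg ‖gradient u x‖) (frobSq_nonneg (fderiv ℝ (NGrad u) x))
    rwa [norm_gradient_sq_mul_frobSq_fderiv_nGrad hu hx, sub_nonneg] at hnonneg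

lemma setIntegral_norm_gradient_sq_mul_frobSq_fderiv_nGrad (hu : ContDiff ℝ 2 u)
    (s : Set (EuclideanSpace ℝ (Fin N))) :
    ∫ x in s ∩ {y | gradient u y ≠ 0}, ‖gradient u x‖ ^ 2 * FrobSq (fderiv ℝ (NGrad u) x) =
      ∫ x in s, (FrobSq (fderiv ℝ (gradient u) x) -
        ‖gradient (fun z => ‖gradient u z‖) x‖ ^ 2) := by
  have hG : ContDiff ℝ 1 (gradient u) := contDiff_gradient hu (by norm_num)
  have hdiff : Differentiable ℝ (gradient u) := hG.differentiable one_ne_zero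
  have hmeas : MeasurableSet {y | gradient u y ≠ 0} :=
    (isOpen_ne.preimage hG.continuous).measurableSet
  rw [← setIntegral_indicator hmeas]
  refine integral_congr_ae (ae_restrict_of_ae ?_)
  filter_upwards [ae_fderiv_eq_zero_of_eq_const volume hdiff 0] with x hcrit
  by_cases hx : gradient u x = 0
  · rw [Set.indicator_of_notMem (by simpa using hx), hcrit hx, gradient_norm_gradient_eq_zero hx]
    simp [FrobSq]
  · rw [Set.indicator_of_mem (by simpa using hx),
      norm_gradient_sq_mul_frobSq_fderiv_nGrad (hdiff x) hx]

end Frobenius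

section Divergence

variable {N : ℕ}

lemma fderiv_divg {G : EuclideanSpace ℝ (Fin N) → EuclideanSpace ℝ (Fin N)}
    {x : EuclideanSpace ℝ (Fin N)} (hG : DifferentiableAt ℝ (fderiv ℝ G) x)
    (w : EuclideanSpace ℝ (Fin N)) :
    fderiv ℝ (Divg G) x w =
      ∑ i, ⟪fderiv ℝ (fderiv ℝ G) x w (EuclideanSpace.single i 1), EuclideanSpace.single i 1⟫ := by
  have hterm : ∀ i : Fin N, HasFDerivAt
      (fun y => ⟪fderiv ℝ G y (EuclideanSpace.single i 1), EuclideanSpace.single i (1 : ℝ)⟫) _ x :=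
    fun i => (hG.hasFDerivAt.clm_apply (hasFDerivAt_const _ x)).inner ℝ (hasFDerivAt_const _ x)
  have hsum : HasFDerivAt (Divg G) _ x := HasFDerivAt.fun_sum fun i _ => hterm i
  rw [hsum.fderiv]
  simp

lemma divg_fderiv_apply_self {G : EuclideanSpace ℝ (Fin N) → EuclideanSpace ℝ (Fin N)}
    {x : EuclideanSpace ℝ (Fin N)} (hG : ContDiffAt ℝ 2 G x) :
    Divg (fun y => fderiv ℝ G y (G y)) x = fderiv ℝ (Divg G) x (G x) +
      ∑ i, ⟪fderiv ℝ G x (fderiv ℝ G x (EuclideanSpace.single i 1)),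
        EuclideanSpace.single i 1⟫ := by
  have hG' : DifferentiableAt ℝ (fderiv ℝ G) x :=
    (hG.fderiv_right (m := 1) (by norm_num)).differentiableAt one_ne_zero
  rw [fderiv_divg hG', ← Finset.sum_add_distrib]
  refine Finset.sum_congr rfl fun i _ => ?_
  rw [fderiv_clm_apply hG' (hG.differentiableAt two_ne_zero),
    hG.isSymmSndFDerivAt (by simp) (G x), ← inner_add_left, add_comm]
  rfl

variable {u : EuclideanSpace ℝ (Fin N) → ℝ}

lemma contDiff_lap {m n : WithTop ℕ∞} (hu : ContDiff ℝ n u) (hmn : m + 2 ≤ n) :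
    ContDiff ℝ m (Lap u) :=
  ContDiff.sum fun i _ => by
    have hu' : ContDiff ℝ (m + 1) fun y => fderiv ℝ u y (EuclideanSpace.single i 1) :=
      (hu.fderiv_right (by rwa [add_assoc, one_add_one_eq_two])).clm_apply contDiff_const
    exact (hu'.fderiv_right le_rfl).clm_apply contDiff_const

lemma divg_gradient (hu : ContDiff ℝ 2 u) : Divg (gradient u) = Lap u := by
  ext x
  have hu' : DifferentiableAt ℝ (fderiv ℝ u) x :=
    (hu.fderiv_right (m := 1) (by norm_num)).differentiable one_ne_zero x
  refine Finset.sum_congr rfl fun i _ => ?_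
  rw [inner_fderiv_gradient, Hess, fderiv_clm_apply hu' (differentiableAt_const _)]
  simp

/-- Bochner's formula, since the field on the left is `∇(‖∇u‖² / 2)`. -/
lemma divg_fderiv_gradient_apply_gradient (hu : ContDiff ℝ 3 u) (x : EuclideanSpace ℝ (Fin N)) :
    Divg (fun y => fderiv ℝ (gradient u) y (gradient u y)) x =
      fderiv ℝ (Lap u) x (gradient u x) + FrobSq (fderiv ℝ (gradient u) x) := by
  have hu₂ : ContDiff ℝ 2 u := hu.of_le (by norm_num)
  rw [divg_fderiv_apply_self (contDiff_gradient hu (by norm_num)).contDiffAt, divg_gradient hu₂,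
    sum_inner_apply_apply_of_isSymmetric (isSymmetric_fderiv_gradient hu₂.contDiffAt)]

lemma continuous_frobSq_fderiv_gradient (hu : ContDiff ℝ 2 u) :
    Continuous fun x => FrobSq (fderiv ℝ (gradient u) x) :=
  continuous_frobSq.comp
    ((contDiff_gradient hu (m := 1) (by norm_num)).continuous_fderiv one_ne_zero)

lemma continuous_fderiv_lap_apply_gradient (hu : ContDiff ℝ 3 u) :
    Continuous fun x => fderiv ℝ (Lap u) x (gradient u x) :=
  ((contDiff_lap (m := 1) hu (by norm_num)).continuous_fderiv one_ne_zero).clm_apply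
    (contDiff_gradient (m := 2) hu (by norm_num)).continuous

end Divergence

section PeriodBox

variable {N : ℕ} {L : Fin N → ℝ}

/-- The half-open box `[0, L₁) × ⋯ × [0, L_N)`, a fundamental domain for functions with period
`L i` in the `i`-th coordinate direction when the `L i` are positive. -/
def periodBox (L : Fin N → ℝ) : Set (EuclideanSpace ℝ (Fin N)) :=
  {y | ∀ i, y i ∈ Set.Ico 0 (L i)}

lemma integrableOn_periodBox {F : Type*} [NormedAddCommGroup F] {h : EuclideanSpace ℝ (Fin N) → F}
    (hh : Continuous h) : IntegrableOn h (periodBox L) := by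
  have hcompact : IsCompact (WithLp.toLp 2 '' Set.Icc 0 L : Set (EuclideanSpace ℝ (Fin N))) :=
    isCompact_Icc.image (by fun_prop)
  exact (hh.continuousOn.integrableOn_compact hcompact).mono_set fun y hy =>
    ⟨y.ofLp, ⟨fun i => (hy i).1, fun i => (hy i).2.le⟩, rfl⟩

lemma setIntegral_periodBox {F : Type*} [NormedAddCommGroup F] [NormedSpace ℝ F] (L : Fin N → ℝ)
    (h : EuclideanSpace ℝ (Fin N) → F) :
    ∫ x in periodBox L, h x = ∫ x in Set.Icc 0 L, h (WithLp.toLp 2 x) := by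
  have hpreimage : WithLp.toLp 2 ⁻¹' periodBox L = Set.univ.pi fun i => Set.Ico 0 (L i) := by
    ext y
    simp [periodBox]
  rw [← (PiLp.volume_preserving_toLp (Fin N)).setIntegral_preimage_emb
    (MeasurableEquiv.toLp 2 (Fin N → ℝ)).measurableEmbedding, hpreimage]
  exact setIntegral_congr_set Measure.univ_pi_Ico_ae_eq_Icc

lemma toLp_insertNth_add {n : ℕ} (i : Fin (n + 1)) (a b : ℝ) (x : Fin n → ℝ) :
    WithLp.toLp 2 (i.insertNth (a + b) x : Fin (n + 1) → ℝ) =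
      WithLp.toLp 2 (i.insertNth a x : Fin (n + 1) → ℝ) + b • EuclideanSpace.single i 1 := by
  ext j
  refine i.succAboveCases ?_ (fun k => ?_) j <;> simp

lemma setIntegral_divg_eq_zero_of_periodic (hL : ∀ i, 0 ≤ L i)
    {Z : EuclideanSpace ℝ (Fin N) → EuclideanSpace ℝ (Fin N)} (hZ : ContDiff ℝ 1 Z)
    (hper : ∀ i, Function.Periodic (fun x => Z x i) (L i • EuclideanSpace.single i 1)) :
    ∫ x in periodBox L, Divg Z x = 0 := by
  cases N with
  | zero => simp [Divg]
  | succ n =>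
    rw [setIntegral_periodBox]
    let T : EuclideanSpace ℝ (Fin (n + 1)) ≃L[ℝ] (Fin (n + 1) → ℝ) :=
      EuclideanSpace.equiv (Fin (n + 1)) ℝ
    let Z' : (Fin (n + 1) → ℝ) → (Fin (n + 1) → ℝ) →L[ℝ] (Fin (n + 1) → ℝ) := fun x =>
      (T : _ →L[ℝ] _).comp ((fderiv ℝ Z (T.symm x)).comp (T.symm : _ →L[ℝ] _))
    have hderiv : ∀ x, HasFDerivAt (fun y => T (Z (T.symm y))) (Z' x) x := fun x =>
      T.hasFDerivAt.comp x
        (((hZ.differentiable one_ne_zero _).hasFDerivAt).comp x T.symm.hasFDerivAt)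
    have hZ'_cont : Continuous Z' := by
      have := hZ.continuous_fderiv one_ne_zero
      fun_prop
    have hdivg : ∀ x, ∑ i, Z' x (Pi.single i 1) i = Divg Z (WithLp.toLp 2 x) := fun x =>
      Finset.sum_congr rfl fun i _ => by
        rw [EuclideanSpace.inner_single_right]
        simp [Z', T]
    have hdiv_thm := integral_divergence_of_hasFDerivAt_off_countable (a := 0) (b := L) hL
      (fun y => T (Z (T.symm y))) Z' ∅ Set.countable_empty
      (fun x _ => (hderiv x).continuousAt.continuousWithinAt) (fun x _ => hderiv x)
      (Continuous.integrableOn_Icc (by fun_prop))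
    simp only [hdivg] at hdiv_thm
    rw [hdiv_thm]
    refine Finset.sum_eq_zero fun i _ => sub_eq_zero.2 (setIntegral_congr_fun measurableSet_Icc
      fun x _ => ?_)
    have hshift := toLp_insertNth_add i 0 (L i) x
    rw [zero_add] at hshift
    exact (congrArg (Z · i) hshift).trans (hper i _)

lemma setIntegral_frobSq_fderiv_gradient (hL : ∀ i, 0 ≤ L i) {u : EuclideanSpace ℝ (Fin N) → ℝ}
    (hu : ContDiff ℝ 3 u)
    (hper : ∀ i, Function.Periodic u (L i • EuclideanSpace.single i 1)) :
    ∫ x in periodBox L, FrobSq (fderiv ℝ (gradient u) x) =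
      - ∫ x in periodBox L, fderiv ℝ (Lap u) x (gradient u x) := by
  have hG : ContDiff ℝ 2 (gradient u) := contDiff_gradient hu (by norm_num)
  have hG_per : ∀ i, Function.Periodic (gradient u) (L i • EuclideanSpace.single i 1) :=
    fun i => periodic_gradient (hper i)
  have hdivg := setIntegral_divg_eq_zero_of_periodic hL
    (Z := fun y => fderiv ℝ (gradient u) y (gradient u y))
    ((hG.fderiv_right (by norm_num)).clm_apply (hG.of_le (by norm_num)))
    fun i x => by simp only [hG_per i x, periodic_fderiv (hG_per i) x]
  simp only [divg_fderiv_gradient_apply_gradient hu] at hdivg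
  rw [integral_add (integrableOn_periodBox (continuous_fderiv_lap_apply_gradient hu))
    (integrableOn_periodBox (continuous_frobSq_fderiv_gradient (hu.of_le (by norm_num))))] at hdivg
  linarith

lemma integrableOn_periodBox_norm_gradient_norm_gradient_sq {u : EuclideanSpace ℝ (Fin N) → ℝ}
    (hu : ContDiff ℝ 2 u) :
    IntegrableOn (fun x => ‖gradient (fun z => ‖gradient u z‖) x‖ ^ 2) (periodBox L) := by
  have hG : Differentiable ℝ (gradient u) :=
    (contDiff_gradient (m := 1) hu (by norm_num)).differentiable one_ne_zero
  refine (integrableOn_periodBox (continuous_frobSq_fderiv_gradient hu)).mono'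
    (measurable_norm_gradient_sq _).aestronglyMeasurable (Eventually.of_forall fun x => ?_)
  rw [Real.norm_of_nonneg (sq_nonneg _)]
  exact norm_gradient_norm_gradient_sq_le (hG x)

lemma setIntegral_norm_gradient_norm_gradient_sq_add_fderiv_lap (hL : ∀ i, 0 ≤ L i)
    {u : EuclideanSpace ℝ (Fin N) → ℝ} (hu : ContDiff ℝ 3 u)
    (hper : ∀ i, Function.Periodic u (L i • EuclideanSpace.single i 1)) :
    ∫ x in periodBox L, (‖gradient (fun z => ‖gradient u z‖) x‖ ^ 2 +
        fderiv ℝ (Lap u) x (gradient u x)) =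
      - ∫ x in periodBox L ∩ {y | gradient u y ≠ 0},
          ‖gradient u x‖ ^ 2 * FrobSq (fderiv ℝ (NGrad u) x) := by
  have hu₂ : ContDiff ℝ 2 u := hu.of_le (by norm_num)
  have hgrad_norm := integrableOn_periodBox_norm_gradient_norm_gradient_sq (L := L) hu₂
  rw [setIntegral_norm_gradient_sq_mul_frobSq_fderiv_nGrad hu₂,
    integral_sub (integrableOn_periodBox (continuous_frobSq_fderiv_gradient hu₂)) hgrad_norm,
    integral_add hgrad_norm (integrableOn_periodBox (continuous_fderiv_lap_apply_gradient hu)),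
    setIntegral_frobSq_fderiv_gradient hL hu hper]
  ring

end PeriodBox

theorem statement5_general {N : ℕ} (L : Fin N → ℝ) (hL : ∀ i, 0 ≤ L i) (f : ℝ → ℝ)
    (u : EuclideanSpace ℝ (Fin N) → ℝ) (hu : ContDiff ℝ 3 u)
    (hper : ∀ (x : EuclideanSpace ℝ (Fin N)) (i : Fin N),
      u (x + L i • EuclideanSpace.single i 1) = u x)
    (hpde : ∀ x, Lap u x + f (u x) = 0) :
    (∫ x in {y : EuclideanSpace ℝ (Fin N) | ∀ i, y i ∈ Set.Ico 0 (L i)},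
        (‖gradient (fun z => ‖gradient u z‖) x‖ ^ 2 - deriv f (u x) * ‖gradient u x‖ ^ 2)) =
      - ∫ x in {y : EuclideanSpace ℝ (Fin N) | ∀ i, y i ∈ Set.Ico 0 (L i)} ∩
          {y : EuclideanSpace ℝ (Fin N) | gradient u y ≠ 0},
          ‖gradient u x‖ ^ 2 * FrobSq (fderiv ℝ (NGrad u) x) := by
  have hf : f ∘ u = -Lap u := funext fun x => eq_neg_of_add_eq_zero_right (hpde x)
  have hlap : Differentiable ℝ (Lap u) :=
    (contDiff_lap (m := 1) hu (by norm_num)).differentiable one_ne_zero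
  have hfu : Differentiable ℝ (f ∘ u) := hf ▸ hlap.neg
  have hforce : ∀ x,
      fderiv ℝ (Lap u) x (gradient u x) = -(deriv f (u x) * ‖gradient u x‖ ^ 2) := fun x => by
    have hchain := fderiv_comp_apply_gradient (hu.of_le (by norm_num)).contDiffAt (hfu x)
    rw [hf, fderiv_neg, neg_apply, smul_eq_mul] at hchain
    linarith
  simp only [sub_eq_add_neg, ← hforce]
  exact setIntegral_norm_gradient_norm_gradient_sq_add_fderiv_lap hL hu fun i x => hper x i

/-- flat-torus instance of Lemma 3.3. For a periodic `C³` solution of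
`Δu + f(u) = 0` and `v = ‖∇u‖`, the second-variation quadratic form at `v` satisfies
`∫_Q (‖∇v‖² − f'(u) v²) = −∫_{Q∩U} ‖∇u‖² ‖DV‖_F²`. -/
theorem statement5 {N : ℕ} (hN : 1 ≤ N) (L : Fin N → ℝ) (hL : ∀ i, 0 < L i)
    (f : ℝ → ℝ) (hf : ContDiff ℝ 1 f)
    (u : EuclideanSpace ℝ (Fin N) → ℝ) (hu : ContDiff ℝ 3 u)
    (hper : ∀ (x : EuclideanSpace ℝ (Fin N)) (i : Fin N),
      u (x + L i • EuclideanSpace.single i 1) = u x)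
    (hpde : ∀ x, Lap u x + f (u x) = 0) :
    (∫ x in {y : EuclideanSpace ℝ (Fin N) | ∀ i, y i ∈ Set.Ico 0 (L i)},
        (‖gradient (fun z => ‖gradient u z‖) x‖ ^ 2 - deriv f (u x) * ‖gradient u x‖ ^ 2)) =
      - ∫ x in {y : EuclideanSpace ℝ (Fin N) | ∀ i, y i ∈ Set.Ico 0 (L i)} ∩
          {y : EuclideanSpace ℝ (Fin N) | gradient u y ≠ 0},
          ‖gradient u x‖ ^ 2 * FrobSq (fderiv ℝ (NGrad u) x) :=
  statement5_general L (fun i => (hL i).le) f u hu hper hpde
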